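/- arXiv:2605.14955 — 6 statements merged into one kernel-verified Lean document; each statement's English description precedes it below -/
import Mathlib

section
/- There exists a constant C > 0 such that for every finite word w of length n, the number RP(w) of distinct factors of w that are rational powers of exponent at least 2 of some nonempty word satisfies RP(w) ≤ n²/8 + C·n. -/
/-!
Fix a linear order on the letters and let `n = |w|`. Every rational power `v` of exponent at
least `2`, with least period `p`, is a window of `s = u^ω` for a Lyndon word `u` of length `p`
(`exists_lyn`); the pairs `(p, s)` so obtained index the classes. For a class `c`, let `m c` be
the number of orders `q ≥ p` such that all windows of `s` of length `q + 1` are factors of `w`,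
i.e. such that `s` traces a circuit of length `p` in the Rauzy graph of order `q`, whose vertices
and edges are the factors of length `q` and `q + 1`.

*Size of a class.* The set of residues `r` modulo `p` at which the window of length `ℓ` occurs in
`w` loses at least one element whenever `ℓ` grows by one, once it is proper. Hence at most
`min p (2p + m - ℓ)` windows of length `ℓ ≥ 2p` occur, and summing over `ℓ` shows that the class
contains at most `p m / 2 + m² / 8 + m / 2` rational powers (`sum_occ_bound`).

*Independence of circuits.* The lexicographically least edge of a circuit determines its class
(`Lyn.unique`), and every other edge of the circuit is larger. So all these least edges can be
deleted from the connected Rauzy graph without disconnecting it (`propagate`), and the number of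
circuits of order `q` is at most `|F (q + 1)| - |F q| + 1` (`circ_card`), where `F q` is the set of
factors of length `q`. Summing over `q ≥ p`, and using `|F p| ≥ p`, the sum `T c` of `m` over the
classes with period at least `p` satisfies `T c ≤ n + 1 - 2p` (`sum_orders_le`).

*Optimisation.* Inserting `2p ≤ n + 1 - T c` into the size bound and using
`2 ∑ m T ≥ (∑ m)² + ∑ m²`, the terms `m²` cancel, leaving
`8 RP(w) ≤ 2 (n + 3) S - S² ≤ (n + 3)²` with `S = ∑ m` (`optimise`).
-/

/-- `wpow u k` is the concatenation of `k` copies of the word `u`. -/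
def wpow {α : Type*} (u : List α) : ℕ → List α
  | 0 => []
  | n + 1 => u ++ wpow u n

/-- A nonempty word is primitive if it is not a `k`-th power, `k ≥ 2`, of any word. -/
def Primitive {α : Type*} (u : List α) : Prop :=
  u ≠ [] ∧ ∀ (v : List α) (k : ℕ), 2 ≤ k → u ≠ wpow v k

/-- `v` is a rational power of exponent at least 2 of the nonempty word `p`:
`v = p^k p'` with `k ≥ 2` an integer and `p'` a (possibly empty) proper prefix of `p`. -/
def IsRatPow {α : Type*} (p v : List α) : Prop :=
  p ≠ [] ∧ ∃ (k : ℕ) (p' : List α), 2 ≤ k ∧ p' <+: p ∧ p' ≠ p ∧ v = wpow p k ++ p'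

/-- Two words are conjugate. -/
def Conj {α : Type*} (u v : List α) : Prop :=
  ∃ x y, u = x ++ y ∧ v = y ++ x

/-- The set of factors of a word. -/
def Fac {α : Type*} (w : List α) : Set (List α) := {v | v <:+: w}

/-- `PerFac u i` is the set `[u]_i` of length-`i` factors of the infinite periodic
word `u^ω` (equivalently, of `u^(i+1)` when `u` is nonempty). -/
def PerFac {α : Type*} (u : List α) (i : ℕ) : Set (List α) :=
  {v | v.length = i ∧ v <:+: wpow u (i + 1)}

/-- The small-circuit condition `SC_w(u,q)`: `q ≥ |u|`, `[u]_q ⊆ Fac(w)` and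
`[u]_{q+1} ⊆ Fac(w)`. -/
def SC {α : Type*} (w u : List α) (q : ℕ) : Prop :=
  u.length ≤ q ∧ PerFac u q ⊆ Fac w ∧ PerFac u (q + 1) ⊆ Fac w

/-- `M(u)`: the number of integers `q` for which `SC_w(u,q)` holds. -/
noncomputable def Mnum {α : Type*} (w u : List α) : ℕ :=
  Set.ncard {q : ℕ | SC w u q}

/-- `QClass_w(u)`: the set of factors of `w` that are rational powers of exponent
at least 2 of some conjugate of `u`. -/
def QClass {α : Type*} (w u : List α) : Set (List α) :=
  {v | v <:+: w ∧ ∃ p, Conj u p ∧ IsRatPow p v}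

/-- `RP(w)`: the number of distinct factors of `w` that are rational powers of
exponent at least 2 of some nonempty word. -/
noncomputable def RP {α : Type*} (w : List α) : ℕ :=
  Set.ncard {v | v <:+: w ∧ ∃ p, IsRatPow p v}

section RationalPowers

variable {α : Type*}

/-! ### Windows and factors -/

/-- The window `s(r) s(r+1) ⋯ s(r+ℓ-1)` of length `ℓ` of the infinite word `s`. -/
def win (s : ℕ → α) (r ℓ : ℕ) : List α := (List.range ℓ).map fun i => s (r + i)

@[simp] lemma win_length (s : ℕ → α) (r ℓ : ℕ) : (win s r ℓ).length = ℓ := by simp [win]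

lemma win_eq_iff {s t : ℕ → α} {r r' ℓ : ℕ} :
    win s r ℓ = win t r' ℓ ↔ ∀ i < ℓ, s (r + i) = t (r' + i) := by
  simp [win, List.map_inj_left]

lemma win_tail (s : ℕ → α) (r ℓ : ℕ) : (win s r (ℓ + 1)).tail = win s (r + 1) ℓ := by
  simp [win, List.range_succ_eq_map, Function.comp_def, Nat.add_assoc, Nat.add_comm 1]

lemma win_dropLast (s : ℕ → α) (r ℓ : ℕ) : (win s r (ℓ + 1)).dropLast = win s r ℓ := by
  simp [win, List.range_succ]

open Classical in
/-- The finite set of windows of length `ℓ` of `w` that lie inside `[0, n)`; it is empty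
for `ℓ > n`. -/
noncomputable def facs (w : ℕ → α) (n ℓ : ℕ) : Finset (List α) :=
  (Finset.range (n + 1 - ℓ)).image fun i => win w i ℓ

lemma mem_facs {w : ℕ → α} {n ℓ : ℕ} {v : List α} :
    v ∈ facs w n ℓ ↔ ∃ i, i + ℓ ≤ n ∧ win w i ℓ = v := by
  simp only [facs, Finset.mem_image, Finset.mem_range]
  exact ⟨fun ⟨i, h, e⟩ => ⟨i, by omega, e⟩, fun ⟨i, h, e⟩ => ⟨i, by omega, e⟩⟩

/-! ### Lyndon sequences -/

/-- `s` has period `p` and is lexicographically smaller than each of its shifts by `0 < r < p`: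
`s` is the infinite power of a Lyndon word of length `p`. -/
structure Lyn [LinearOrder α] (p : ℕ) (s : ℕ → α) : Prop where
  pos : 0 < p
  per : ∀ i, s (i + p) = s i
  lt : ∀ r, 0 < r → r < p → ∃ j, (∀ i < j, s i = s (r + i)) ∧ s j < s (r + j)

lemma per_mod {p : ℕ} {s : ℕ → α} (h : ∀ i, s (i + p) = s i) (i : ℕ) : s (i % p) = s i :=
  Function.Periodic.map_mod_nat h i

lemma win_mod {p : ℕ} {s : ℕ → α} (h : ∀ i, s (i + p) = s i) (r ℓ : ℕ) :
    win s (r % p) ℓ = win s r ℓ := by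
  rw [win_eq_iff]
  intro i _
  rw [← per_mod h, ← per_mod h (r + i)]
  simp

section Order
variable [LinearOrder α]

lemma Lyn.lt' {p : ℕ} {s : ℕ → α} (h : Lyn p s) {r : ℕ} (h0 : 0 < r) (hr : r < p) :
    ∃ j < p, (∀ i < j, s i = s (r + i)) ∧ s j < s (r + j) := by
  obtain ⟨j, hj, hlt⟩ := h.lt r h0 hr
  refine ⟨j, ?_, hj, hlt⟩
  by_contra hjp
  have hm := hj (j % p) (lt_of_lt_of_le (Nat.mod_lt _ h.pos) (by omega))
  rw [per_mod h.per] at hm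
  rw [hm, ← per_mod h.per (r + j), ← per_mod h.per (r + j % p)] at hlt
  simp at hlt

/-- No shift of a Lyndon sequence is lexicographically smaller than the sequence. -/
lemma Lyn.not_lt {p : ℕ} {s : ℕ → α} (h : Lyn p s) (r j : ℕ)
    (hj : ∀ i < j, s (r + i) = s i) : ¬ s (r + j) < s j := by
  have key : ∀ i, s (r + i) = s (r % p + i) := fun i => by
    rw [← per_mod h.per, ← per_mod h.per (r % p + i)]; simp
  intro hlt
  rcases Nat.eq_zero_or_pos (r % p) with h0 | h0
  · rw [key, h0, zero_add] at hlt
    exact lt_irrefl _ hlt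
  · obtain ⟨k, hk, hk'⟩ := h.lt _ h0 (Nat.mod_lt _ h.pos)
    rw [key] at hlt
    rcases lt_trichotomy j k with h1 | h1 | h1
    · rw [hk j h1] at hlt; exact lt_irrefl _ hlt
    · subst h1; exact lt_asymm hlt hk'
    · have := hj k h1
      rw [key] at this
      rw [this] at hk'; exact lt_irrefl _ hk'

lemma Lyn.no_agree_of_lt {p p' : ℕ} {s t : ℕ → α} (hs : Lyn p s) (ht : Lyn p' t) (hpp : p < p')
    (h : ∀ i ≤ p', s i = t i) : False := by
  obtain ⟨j, hjp, hj, hlt⟩ := ht.lt' hs.pos hpp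
  have hge : p' - p ≤ j := by
    by_contra hc
    rw [← h j (by omega), ← h (p + j) (by omega), add_comm p j, hs.per] at hlt
    exact lt_irrefl _ hlt
  obtain ⟨i, rfl⟩ := Nat.exists_eq_add_of_le hge
  have e : ∀ i, t (p + (p' - p + i)) = t i := fun i => by
    rw [show p + (p' - p + i) = i + p' by omega, ht.per]
  -- the first difference of `t` and its shift by `p`, read in `s`, makes a shift of `s` too small
  refine hs.not_lt (p' - p) i (fun k hk => ?_) ?_
  · have := hj (p' - p + k) (by omega)
    rw [e] at this
    rw [h _ (by omega), h _ (by omega), this]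
  · rw [e] at hlt
    rwa [h _ (by omega), h _ (by omega)]

/-- A Lyndon sequence, and its period, are determined by any prefix longer than the period. -/
lemma Lyn.unique {p p' q : ℕ} {s t : ℕ → α} (hs : Lyn p s) (ht : Lyn p' t) (hp : p ≤ q)
    (hp' : p' ≤ q) (h : win s 0 (q + 1) = win t 0 (q + 1)) : p = p' ∧ s = t := by
  rw [win_eq_iff] at h
  simp only [zero_add] at h
  rcases lt_trichotomy p p' with h1 | h1 | h1
  · exact (hs.no_agree_of_lt ht h1 fun i hi => h i (by omega)).elim
  · subst h1
    refine ⟨rfl, funext fun i => ?_⟩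
    have := Nat.mod_lt i hs.pos
    rw [← per_mod hs.per, ← per_mod ht.per i, h _ (by omega)]
  · exact (ht.no_agree_of_lt hs h1 fun i hi => (h i (by omega)).symm).elim

lemma Lyn.win_inj {p : ℕ} {s : ℕ → α} (hs : Lyn p s) {a b : ℕ} (hab : a < b) (hb : b < a + p) :
    win s a p ≠ win s b p := by
  intro h
  rw [win_eq_iff] at h
  have h2 : ∀ i, s (a + i) = s (b + i) := fun i => by
    have := h _ (Nat.mod_lt i hs.pos)
    rw [← per_mod hs.per, ← per_mod hs.per (b + _)] at this ⊢
    simpa using this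
  obtain ⟨j, _, hlt⟩ := hs.lt (b - a) (by omega) (by omega)
  -- translate the index `j` by a multiple of `p` that is at least `a`
  have e1 := h2 (j + a * p - a)
  have : a ≤ a * p := Nat.le_mul_of_pos_right _ hs.pos
  rw [show a + (j + a * p - a) = j + a * p by omega,
    show b + (j + a * p - a) = (b - a + j) + a * p by omega,
    ← per_mod hs.per, ← per_mod hs.per (b - a + j + _)] at e1
  simp only [Nat.add_mul_mod_self_right] at e1
  rw [per_mod hs.per, per_mod hs.per] at e1
  rw [e1] at hlt
  exact lt_irrefl _ hlt

/-- A word of length at least twice one of its periods is a window of the Lyndon sequence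
belonging to its least period. -/
lemma exists_lyn (v : ℕ → α) (ℓ d : ℕ) (hd : 0 < d) (hℓ : 2 * d ≤ ℓ)
    (hv : ∀ i, i + d < ℓ → v (i + d) = v i) :
    ∃ p s r, Lyn p s ∧ 2 * p ≤ ℓ ∧ win v 0 ℓ = win s r ℓ := by
  classical
  have hex : ∃ d, 0 < d ∧ 2 * d ≤ ℓ ∧ ∀ i, i + d < ℓ → v (i + d) = v i := ⟨d, hd, hℓ, hv⟩
  obtain ⟨hp, hpl, hper⟩ := Nat.find_spec hex
  have hmin := fun m => Nat.find_min hex (m := m)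
  set p := Nat.find hex
  clear_value p
  set t : ℕ → α := fun i => v (i % p) with ht
  have tper : ∀ i, t (i + p) = t i := fun i => by simp [ht]
  have tv : ∀ i < ℓ, v i = t i := by
    intro i
    induction i using Nat.strong_induction_on with
    | _ i ih =>
      intro hi
      rcases lt_or_ge i p with h | h
      · simp [ht, Nat.mod_eq_of_lt h]
      · obtain ⟨k, rfl⟩ := Nat.exists_eq_add_of_le' h
        rw [hper k hi, tper, ih k (by omega) (by omega)]
  obtain ⟨r0, hr0, hmin0⟩ := Finset.exists_min_image (Finset.range p)
    (fun r => toLex fun i => t (r + i)) ⟨0, by simpa using hp⟩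
  rw [Finset.mem_range] at hr0
  refine ⟨p, fun i => t (r0 + i), p - r0, ⟨hp, fun i => ?_, fun r h0 hr => ?_⟩, hpl, ?_⟩
  · simp only [← add_assoc, tper]
  · have hle := hmin0 ((r0 + r) % p) (by simpa using Nat.mod_lt _ hp)
    have e : (fun i => t ((r0 + r) % p + i)) = fun i => t (r0 + (r + i)) := by
      funext i
      rw [← per_mod tper, ← per_mod tper (r0 + (r + i)), Nat.mod_add_mod, add_assoc]
    rw [e] at hle
    rcases hle.lt_or_eq with hlt | heq
    · exact hlt
    · exfalso
      have heq' := toLex.injective heq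
      -- equality of the two shifts would give `v` the smaller period `r`
      refine hmin r hr ⟨h0, by omega, fun i hi => ?_⟩
      have := congrFun heq' (i + (p - r0))
      rw [tv _ hi, tv i (by omega)]
      rw [show r0 + (i + (p - r0)) = i + p by omega,
        show r0 + (r + (i + (p - r0))) = i + r + p by omega, tper, tper] at this
      exact this.symm
  · rw [win_eq_iff]
    intro i hi
    rw [show r0 + (p - r0 + i) = i + p by omega, tper, zero_add, tv i hi]

end Order

/-! ### Size of a class -/

open Classical in
/-- The residues `r` modulo `p` such that the window of `s` of length `ℓ` at `r` is a factor
of `w[0, n)`. -/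
noncomputable def occ (w : ℕ → α) (n p : ℕ) (s : ℕ → α) (ℓ : ℕ) : Finset ℕ :=
  (Finset.range p).filter fun r => win s r ℓ ∈ facs w n ℓ

lemma mem_occ {w : ℕ → α} {n p : ℕ} {s : ℕ → α} {ℓ r : ℕ} :
    r ∈ occ w n p s ℓ ↔ r < p ∧ win s r ℓ ∈ facs w n ℓ := by
  simp [occ]

lemma occ_subset (w : ℕ → α) (n p : ℕ) (s : ℕ → α) (ℓ : ℕ) : occ w n p s ℓ ⊆ Finset.range p :=
  fun _ h => Finset.mem_range.2 (mem_occ.1 h).1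

lemma win_mem_facs_sub {w : ℕ → α} {n : ℕ} {s : ℕ → α} {r ℓ j k : ℕ}
    (h : win s r ℓ ∈ facs w n ℓ) (hjk : j + k ≤ ℓ) : win s (r + j) k ∈ facs w n k := by
  obtain ⟨i, hi, e⟩ := mem_facs.1 h
  refine mem_facs.2 ⟨i + j, by omega, ?_⟩
  rw [win_eq_iff] at e ⊢
  intro x hx
  have := e (j + x) (by omega)
  simpa [add_assoc] using this

lemma occ_anti (w : ℕ → α) (n p : ℕ) (s : ℕ → α) : Antitone (occ w n p s) := by
  intro ℓ ℓ' h r hr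
  rw [mem_occ] at hr ⊢
  exact ⟨hr.1, by simpa using win_mem_facs_sub (j := 0) hr.2 (by omega : 0 + ℓ ≤ ℓ')⟩

lemma occ_succ_mod {w : ℕ → α} {n p : ℕ} {s : ℕ → α} (hp : 0 < p) (hs : ∀ i, s (i + p) = s i)
    {ℓ r : ℕ} (hr : r ∈ occ w n p s (ℓ + 1)) : (r + 1) % p ∈ occ w n p s ℓ := by
  rw [mem_occ] at hr ⊢
  refine ⟨Nat.mod_lt _ hp, ?_⟩
  rw [win_mod hs]
  exact win_mem_facs_sub hr.2 (by omega)

/-- Unless all conjugates occur, the number of occurring windows strictly decreases with the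
length: a proper nonempty subset of `ℤ/p` is not closed under successor. -/
lemma occ_card_succ {w : ℕ → α} {n p : ℕ} {s : ℕ → α} (hp : 0 < p) (hs : ∀ i, s (i + p) = s i)
    {ℓ : ℕ} (hne : occ w n p s ℓ ≠ Finset.range p) :
    (occ w n p s (ℓ + 1)).card ≤ (occ w n p s ℓ).card - 1 := by
  have hsub := occ_anti w n p s (Nat.le_succ ℓ)
  rcases Finset.eq_empty_or_nonempty (occ w n p s ℓ) with h0 | ⟨r0, hr0⟩
  · rw [h0] at hsub ⊢
    simpa using hsub
  · refine Nat.le_sub_one_of_lt (Finset.card_lt_card (hsub.ssubset_of_ne fun heq => hne ?_))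
    have hcl : ∀ k, (r0 + k) % p ∈ occ w n p s ℓ := by
      intro k
      induction k with
      | zero => rw [add_zero, Nat.mod_eq_of_lt (mem_occ.1 hr0).1]; exact hr0
      | succ k ih =>
        have := occ_succ_mod hp hs (heq.symm ▸ ih)
        rwa [Nat.mod_add_mod] at this
    refine (occ_subset ..).antisymm fun x hx => ?_
    rw [Finset.mem_range] at hx
    have h1 := (mem_occ.1 hr0).1
    have := hcl (p - r0 + x)
    rwa [show r0 + (p - r0 + x) = x + p by omega, Nat.add_mod_right, Nat.mod_eq_of_lt hx] at this

open Classical in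
/-- The orders `q ≥ p` at which the circuit of `s` is contained in the Rauzy graph of `w[0, n)`. -/
noncomputable def orders (w : ℕ → α) (n p : ℕ) (s : ℕ → α) : Finset ℕ :=
  (Finset.range (n + 1)).filter fun q => p ≤ q ∧ occ w n p s (q + 1) = Finset.range p

lemma occ_empty {w : ℕ → α} {n p : ℕ} {s : ℕ → α} {ℓ : ℕ} (h : n < ℓ) : occ w n p s ℓ = ∅ := by
  ext r
  simp only [mem_occ, mem_facs, Finset.notMem_empty, iff_false]
  rintro ⟨_, i, hi, _⟩
  omega

/-- With `m` full orders, the window lengths beyond `p + m` are not full, so the count drops by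
one at each further step. -/
lemma occ_card_le {w : ℕ → α} {n p : ℕ} {s : ℕ → α} (hp : 0 < p) (hs : ∀ i, s (i + p) = s i)
    (j : ℕ) : (occ w n p s (p + (orders w n p s).card + 1 + j)).card ≤ p - 1 - j := by
  set m := (orders w n p s).card with hm
  induction j with
  | zero =>
    have : occ w n p s (p + m + 1) ≠ Finset.range p := by
      intro hfull
      have hn : p + m + 1 ≤ n := by
        by_contra hc
        rw [occ_empty (by omega)] at hfull
        have := congrArg Finset.card hfull
        simp at this
        omega
      have hsub : Finset.Icc p (p + m) ⊆ orders w n p s := by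
        intro q hq
        rw [Finset.mem_Icc] at hq
        simp only [orders, Finset.mem_filter, Finset.mem_range]
        refine ⟨by omega, hq.1, (occ_subset ..).antisymm ?_⟩
        rw [← hfull]
        exact occ_anti w n p s (by omega)
      have := Finset.card_le_card hsub
      rw [Nat.card_Icc] at this
      omega
    have h := Finset.card_lt_card ((occ_subset w n p s _).ssubset_of_ne this)
    rw [Finset.card_range] at h
    simp only [add_zero]
    omega
  | succ j ih =>
    rcases Nat.eq_zero_or_pos (occ w n p s (p + m + 1 + j)).card with h0 | h0
    · have := Finset.card_le_card (occ_anti w n p s (by omega : p + m + 1 + j ≤ p + m + 1 + (j + 1)))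
      omega
    · have := occ_card_succ (ℓ := p + m + 1 + j) hp hs (w := w) (n := n) (by
        intro h
        rw [h, Finset.card_range] at ih
        omega)
      rw [← add_assoc]
      omega

lemma sum_min_shift (p N m : ℕ) :
    ∑ j ∈ Finset.range N, min p (m - j) ≤ ∑ k ∈ Finset.range m, min p (k + 1) := by
  induction N generalizing m with
  | zero => simp
  | succ N ih =>
    rw [Finset.sum_range_succ']
    cases m with
    | zero => simp
    | succ m =>
      rw [Finset.sum_range_succ]
      simp only [Nat.add_sub_add_right, Nat.sub_zero]
      have := ih m
      omega

lemma sum_min_bound (p m : ℕ) :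
    8 * ∑ k ∈ Finset.range m, min p (k + 1) ≤ 4 * p * m + m ^ 2 + 4 * m := by
  have h1 : ∀ m ≤ p, 2 * ∑ k ∈ Finset.range m, min p (k + 1) = m * (m + 1) := by
    intro m hm
    induction m with
    | zero => simp
    | succ m ih =>
      rw [Finset.sum_range_succ, mul_add, ih (by omega), min_eq_right (by omega)]
      ring
  have h2 : ∀ j, 2 * ∑ k ∈ Finset.range (p + j), min p (k + 1) = p * (p + 1) + 2 * p * j := by
    intro j
    induction j with
    | zero => simpa using h1 p le_rfl
    | succ j ih =>
      rw [← add_assoc, Finset.sum_range_succ, mul_add, ih, min_eq_left (by omega)]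
      ring
  rcases le_total m p with h | h
  · have := h1 m h
    nlinarith
  · obtain ⟨j, rfl⟩ := Nat.exists_eq_add_of_le h
    have := h2 j
    zify at this ⊢
    nlinarith [sq_nonneg ((p : ℤ) - j)]

lemma sum_occ_bound {w : ℕ → α} {n p : ℕ} {s : ℕ → α} (hp : 0 < p) (hs : ∀ i, s (i + p) = s i) :
    8 * ∑ j ∈ Finset.range (n + 1), (occ w n p s (2 * p + j)).card ≤
      4 * p * (orders w n p s).card + (orders w n p s).card ^ 2 + 4 * (orders w n p s).card := by
  refine le_trans (Nat.mul_le_mul_left 8 ?_) (sum_min_bound _ _)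
  refine le_trans (Finset.sum_le_sum fun j _ => ?_) (sum_min_shift p (n + 1) _)
  refine le_min (by simpa using Finset.card_le_card (occ_subset w n p s (2 * p + j))) ?_
  set m := (orders w n p s).card with hm
  rcases le_or_gt (p + j) m with h | h
  · have := Finset.card_le_card (occ_subset w n p s (2 * p + j))
    rw [Finset.card_range] at this
    omega
  · have := occ_card_le (w := w) (n := n) hp hs (p + j - m - 1)
    rw [← hm, show p + m + 1 + (p + j - m - 1) = 2 * p + j by omega] at this
    omega

/-! ### Independence of small circuits -/

section Graph

open Classical in
/-- The members of `I` whose circuit is contained in the Rauzy graph of order `q`. -/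
noncomputable def circ (w : ℕ → α) (n : ℕ) (I : Finset (ℕ × (ℕ → α))) (q : ℕ) :
    Finset (ℕ × (ℕ → α)) :=
  I.filter fun c => q ∈ orders w n c.1 c.2

lemma mem_circ {w : ℕ → α} {n : ℕ} {I : Finset (ℕ × (ℕ → α))} {q : ℕ} {c : ℕ × (ℕ → α)} :
    c ∈ circ w n I q ↔
      c ∈ I ∧ q ≤ n ∧ c.1 ≤ q ∧ occ w n c.1 c.2 (q + 1) = Finset.range c.1 := by
  simp [circ, orders]

variable [LinearOrder α]

/-- Deleting the least edge of every small circuit keeps the Rauzy graph connected: a predicate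
on vertices that is invariant along the remaining edges and true at the first vertex is true
everywhere. -/
lemma propagate {w : ℕ → α} {n : ℕ} {I : Finset (ℕ × (ℕ → α))} (hI : ∀ c ∈ I, Lyn c.1 c.2)
    {q : ℕ} (P : List α → Prop)
    (hP : ∀ x ∈ facs w n (q + 1), (∀ c ∈ circ w n I q, win c.2 0 (q + 1) ≠ x) →
      (P x.dropLast ↔ P x.tail))
    (h0 : P (win w 0 q)) : ∀ v ∈ facs w n q, P v := by
  classical
  have hK : ∀ c ∈ circ w n I q, (P (win c.2 0 q) ↔ P (win c.2 1 q)) := by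
    by_contra hbad
    push Not at hbad
    obtain ⟨c₁, hc₁, hb₁⟩ := hbad
    -- among the bad circuits choose the lexicographically largest
    obtain ⟨c, hc, hmax⟩ := Finset.exists_max_image
      ((circ w n I q).filter fun c => ¬ (P (win c.2 0 q) ↔ P (win c.2 1 q)))
      (fun c => toLex c.2) ⟨c₁, by
        rw [Finset.mem_filter]
        exact ⟨hc₁, by tauto⟩⟩
    rw [Finset.mem_filter] at hc
    obtain ⟨hc, hb⟩ := hc
    obtain ⟨hcI, hqn, hpq, hfull⟩ := mem_circ.1 hc
    have hL := hI c hcI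
    refine hb ?_
    have hstep : ∀ r, 0 < r → r < c.1 → (P (win c.2 r q) ↔ P (win c.2 (r + 1) q)) := by
      intro r hr0 hr
      have hmem : win c.2 r (q + 1) ∈ facs w n (q + 1) := by
        have : r ∈ occ w n c.1 c.2 (q + 1) := by rw [hfull]; simpa using hr
        exact (mem_occ.1 this).2
      by_cases hx : ∀ c' ∈ circ w n I q, win c'.2 0 (q + 1) ≠ win c.2 r (q + 1)
      · have := hP _ hmem hx
        rwa [win_dropLast, win_tail] at this
      · push Not at hx
        obtain ⟨c', hc', e⟩ := hx
        have hgood : (P (win c'.2 0 q) ↔ P (win c'.2 1 q)) := by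
          by_contra hb'
          have hle := hmax c' (by rw [Finset.mem_filter]; exact ⟨hc', hb'⟩)
          refine absurd hle (not_le_of_gt ?_)
          obtain ⟨j, hjp, hj, hlt⟩ := hL.lt' hr0 hr
          rw [win_eq_iff] at e
          refine ⟨j, fun i hi => ?_, ?_⟩
          · have := e i (by have : i < j := hi; omega)
            rw [zero_add] at this
            exact (hj i hi).trans this.symm
          · have := e j (by omega)
            rw [zero_add] at this
            exact hlt.trans_eq this.symm
        have e1 := congrArg List.dropLast e
        have e2 := congrArg List.tail e
        rw [win_dropLast, win_dropLast] at e1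
        rw [win_tail, win_tail] at e2
        rw [← e1, ← e2]
        exact hgood
    have hchain : ∀ k, 1 + k ≤ c.1 → (P (win c.2 1 q) ↔ P (win c.2 (1 + k) q)) := by
      intro k
      induction k with
      | zero => simp
      | succ k ih =>
        intro hk
        rw [ih (by omega), hstep (1 + k) (by omega) (by omega), add_assoc]
    have hlast := hchain (c.1 - 1) (by have := hL.pos; omega)
    rw [show 1 + (c.1 - 1) = c.1 by have := hL.pos; omega, ← win_mod hL.per c.1,
      Nat.mod_self] at hlast
    exact hlast.symm
  have hE : ∀ x ∈ facs w n (q + 1), (P x.dropLast ↔ P x.tail) := by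
    intro x hx
    by_cases h : ∀ c ∈ circ w n I q, win c.2 0 (q + 1) ≠ x
    · exact hP x hx h
    · push Not at h
      obtain ⟨c, hc, rfl⟩ := h
      rw [win_dropLast, win_tail]
      exact hK c hc
  intro v hv
  obtain ⟨i, hi, rfl⟩ := mem_facs.1 hv
  clear hv
  induction i with
  | zero => exact h0
  | succ i ih =>
    have := hE (win w i (q + 1)) (mem_facs.2 ⟨i, by omega, rfl⟩)
    rw [win_dropLast, win_tail] at this
    exact this.1 (ih (by omega))

/-- Independence of the small circuits: their number is at most the cyclomatic number of the
Rauzy graph of order `q`. A vertex set is recovered from its coboundary on the edges that are not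
least edges of circuits, together with its value at one vertex; counting vertex sets gives
`2 ^ |V| ≤ 2 ^ (|E| - k) * 2`. -/
lemma circ_card {w : ℕ → α} {n : ℕ} {I : Finset (ℕ × (ℕ → α))} (hI : ∀ c ∈ I, Lyn c.1 c.2)
    (q : ℕ) :
    (facs w n q).card + (circ w n I q).card ≤ (facs w n (q + 1)).card + 1 := by
  classical
  set R := (circ w n I q).image fun c => win c.2 0 (q + 1) with hR
  have hRc : R.card = (circ w n I q).card := by
    refine Finset.card_image_of_injOn fun c hc c' hc' e => ?_
    have h := mem_circ.1 hc
    have h' := mem_circ.1 hc'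
    obtain ⟨h1, h2⟩ := (hI c h.1).unique (hI c' h'.1) h.2.2.1 h'.2.2.1 e
    exact Prod.ext h1 h2
  have hRs : R ⊆ facs w n (q + 1) := by
    intro x hx
    obtain ⟨c, hc, rfl⟩ := Finset.mem_image.1 hx
    obtain ⟨h1, _, _, h4⟩ := mem_circ.1 hc
    have : 0 ∈ occ w n c.1 c.2 (q + 1) := by
      rw [h4]; simpa using (hI c h1).pos
    exact (mem_occ.1 this).2
  have hcard : (facs w n q).powerset.card ≤
      ((facs w n (q + 1) \ R).powerset ×ˢ (Finset.univ : Finset Bool)).card := by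
    refine Finset.card_le_card_of_injOn
      (fun A => ((facs w n (q + 1) \ R).filter fun x => ¬ (x.dropLast ∈ A ↔ x.tail ∈ A),
        decide (win w 0 q ∈ A))) ?_ ?_
    · intro A _
      exact Finset.mem_product.2
        ⟨Finset.mem_powerset.2 (Finset.filter_subset _ _), Finset.mem_univ _⟩
    · intro A hA B hB hAB
      simp only [Prod.mk.injEq, decide_eq_decide] at hAB
      obtain ⟨h1, h2⟩ := hAB
      have hp := propagate (w := w) (n := n) hI (q := q) (fun v => (v ∈ A ↔ v ∈ B)) ?_ h2
      · simp only [Finset.coe_powerset, Set.mem_preimage, Set.mem_powerset_iff,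
          Finset.coe_subset] at hA hB
        ext v
        by_cases hv : v ∈ facs w n q
        · exact hp v hv
        · exact ⟨fun h => (hv (hA h)).elim, fun h => (hv (hB h)).elim⟩
      · intro x hx hne
        have hxR : x ∉ R := by
          intro h
          obtain ⟨c, hc, e⟩ := Finset.mem_image.1 h
          exact hne c hc e
        have := congrArg (x ∈ ·) h1
        simp only [Finset.mem_filter, Finset.mem_sdiff, hx, hxR, not_false_eq_true, true_and,
          eq_iff_iff] at this
        tauto
  rw [Finset.card_product, Finset.card_powerset, Finset.card_powerset,
    Finset.card_sdiff_of_subset hRs, Finset.card_univ, Fintype.card_bool, ← pow_succ] at hcard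
  have h3 := (Nat.pow_le_pow_iff_right (by norm_num : 1 < 2)).1 hcard
  have h4 := Finset.card_le_card hRs
  omega

lemma telescope {w : ℕ → α} {n : ℕ} {I : Finset (ℕ × (ℕ → α))} (hI : ∀ c ∈ I, Lyn c.1 c.2)
    (k q : ℕ) (hq : q + k = n + 1) :
    (facs w n q).card + ∑ j ∈ Finset.range k, (circ w n I (q + j)).card ≤ k := by
  induction k generalizing q with
  | zero =>
    have : facs w n q = ∅ := by
      ext v
      simp only [mem_facs, Finset.notMem_empty, iff_false]
      rintro ⟨i, hi, _⟩
      omega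
    simp [this]
  | succ k ih =>
    rw [Finset.sum_range_succ']
    have h1 := ih (q + 1) (by omega)
    have h2 := circ_card (w := w) (n := n) hI q
    simp only [add_zero, add_assoc, add_comm 1] at h1 ⊢
    omega

/-- If `w` has at least `p` factors of length `p`, then the circuits of length at least `p` occupy
in total at most `n + 1 - 2p` orders. -/
lemma sum_orders_le {w : ℕ → α} {n : ℕ} {I : Finset (ℕ × (ℕ → α))} (hI : ∀ c ∈ I, Lyn c.1 c.2)
    {p : ℕ} (hpn : p ≤ n) (hp : p ≤ (facs w n p).card) :
    ∑ c ∈ I with p ≤ c.1, (orders w n c.1 c.2).card + 2 * p ≤ n + 1 := by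
  classical
  have h1 := telescope (w := w) (n := n) hI (n + 1 - p) p (by omega)
  have h2 : ∑ c ∈ I with p ≤ c.1, (orders w n c.1 c.2).card ≤
      ∑ j ∈ Finset.range (n + 1 - p), (circ w n I (p + j)).card := by
    have e1 : ∀ c ∈ I.filter (fun c => p ≤ c.1), (orders w n c.1 c.2).card ≤
        ∑ j ∈ Finset.range (n + 1 - p), if p + j ∈ orders w n c.1 c.2 then 1 else 0 := by
      intro c hc
      rw [Finset.mem_filter] at hc
      rw [← Finset.card_filter]
      refine Finset.card_le_card_of_injOn (fun q => q - p) ?_ ?_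
      · intro q hq
        have hq' := hq
        simp only [orders, Finset.coe_filter, Set.mem_ofPred_eq, Finset.mem_range] at hq'
        simp only [Finset.coe_filter, Set.mem_ofPred_eq, Finset.mem_range]
        rw [show p + (q - p) = q by omega]
        exact ⟨by omega, hq⟩
      · intro a ha b hb hab
        simp only [orders, Finset.coe_filter, Set.mem_ofPred_eq, Finset.mem_range] at ha hb
        simp only at hab
        omega
    refine (Finset.sum_le_sum e1).trans ?_
    rw [Finset.sum_comm]
    refine Finset.sum_le_sum fun j _ => ?_
    rw [← Finset.card_filter]
    refine Finset.card_le_card fun c hc => ?_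
    simp only [Finset.mem_filter] at hc
    simp only [circ, Finset.mem_filter]
    exact ⟨hc.1.1, hc.2⟩
  omega

end Graph

/-! ### Optimisation and counting -/

/-- The final optimisation. It rests on `2 ∑ m c * T c ≥ (∑ m) ^ 2 + ∑ m ^ 2`, where `T c` is the
sum of `m` over the indices with at least as large a period. -/
lemma optimise {ι : Type*} (I : Finset ι) (p m : ι → ℕ) (n : ℕ)
    (h : ∀ c ∈ I, ∑ d ∈ I with p c ≤ p d, m d + 2 * p c ≤ n + 1) :
    ∑ c ∈ I, (4 * p c * m c + m c ^ 2 + 4 * m c) ≤ (n + 3) ^ 2 := by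
  classical
  set S := ∑ c ∈ I, m c with hS
  have hsym : S ^ 2 + ∑ c ∈ I, m c ^ 2 ≤ 2 * ∑ c ∈ I, m c * ∑ d ∈ I with p c ≤ p d, m d := by
    have e1 : ∑ c ∈ I, m c * ∑ d ∈ I with p c ≤ p d, m d =
        ∑ c ∈ I, ∑ d ∈ I, if p c ≤ p d then m c * m d else 0 := by
      refine Finset.sum_congr rfl fun c _ => ?_
      rw [Finset.sum_filter, Finset.mul_sum]
      simp
    have e2 : ∑ c ∈ I, ∑ d ∈ I, (if p c ≤ p d then m c * m d else 0) =
        ∑ c ∈ I, ∑ d ∈ I, if p d ≤ p c then m c * m d else 0 := by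
      rw [Finset.sum_comm]
      simp [mul_comm]
    have e3 : ∑ c ∈ I, m c ^ 2 = ∑ c ∈ I, ∑ d ∈ I, if c = d then m c * m d else 0 := by
      refine Finset.sum_congr rfl fun c hc => ?_
      simp [hc, sq]
    rw [e1, two_mul]
    nth_rewrite 2 [e2]
    rw [e3, hS, sq, Finset.sum_mul_sum]
    simp only [← Finset.sum_add_distrib]
    refine Finset.sum_le_sum fun c _ => Finset.sum_le_sum fun d _ => ?_
    by_cases hcd : c = d
    · subst hcd; simp
    · rcases le_total (p c) (p d) with h1 | h1 <;> simp [hcd, h1]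
  have hmain : ∑ c ∈ I, (4 * p c * m c + m c ^ 2 + 4 * m c) +
      2 * ∑ c ∈ I, m c * ∑ d ∈ I with p c ≤ p d, m d ≤
      2 * (n + 1) * S + ∑ c ∈ I, m c ^ 2 + 4 * S := by
    rw [hS, Finset.mul_sum, Finset.mul_sum, Finset.mul_sum, ← Finset.sum_add_distrib,
      ← Finset.sum_add_distrib, ← Finset.sum_add_distrib]
    refine Finset.sum_le_sum fun c hc => ?_
    have := Nat.mul_le_mul_left (2 * m c) (h c hc)
    nlinarith
  zify at *
  nlinarith [sq_nonneg ((n : ℤ) + 3 - S)]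

section Count
variable [LinearOrder α]

/-- The counting bound for any finite set of factors each of which is a window, of length at
least twice the period, of some Lyndon sequence. -/
lemma count_bound (w : ℕ → α) (n : ℕ) (X : Finset (List α))
    (hX : ∀ v ∈ X, v ∈ facs w n v.length ∧
      ∃ p s r, Lyn p s ∧ 2 * p ≤ v.length ∧ v = win s r v.length) :
    8 * X.card ≤ (n + 3) ^ 2 := by
  classical
  have : Nonempty (ℕ → α) := ⟨w⟩
  choose! hF p s r hL h2 hv using hX
  set φ : List α → ℕ × (ℕ → α) := fun v => (p v, s v) with hφ
  set I := X.image φ with hIdef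
  have hI : ∀ c ∈ I, Lyn c.1 c.2 := by
    intro c hc
    obtain ⟨v, hvX, rfl⟩ := Finset.mem_image.1 hc
    exact hL v hvX
  have hlen : ∀ v ∈ X, v.length ≤ n := by
    intro v hvX
    obtain ⟨i, hi, _⟩ := mem_facs.1 (hF v hvX)
    omega
  have hcard : X.card = ∑ c ∈ I, (X.filter fun v => φ v = c).card :=
    Finset.card_eq_sum_card_fiberwise fun v hvX => Finset.mem_image_of_mem φ hvX
  have hfib : ∀ c ∈ I, (X.filter fun v => φ v = c).card ≤
      ∑ j ∈ Finset.range (n + 1), (occ w n c.1 c.2 (2 * c.1 + j)).card := by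
    intro c hc
    have hsub : (X.filter fun v => φ v = c) ⊆ (Finset.range (n + 1)).biUnion fun j =>
        (occ w n c.1 c.2 (2 * c.1 + j)).image fun r => win c.2 r (2 * c.1 + j) := by
      intro v hvc
      rw [Finset.mem_filter] at hvc
      obtain ⟨hvX, rfl⟩ := hvc
      have hl := hlen v hvX
      have h2v := h2 v hvX
      have hvv := hv v hvX
      have hLv := hL v hvX
      simp only [Finset.mem_biUnion, Finset.mem_image, Finset.mem_range, hφ]
      refine ⟨v.length - 2 * p v, by omega, r v % p v, ?_, ?_⟩
      · rw [show 2 * p v + (v.length - 2 * p v) = v.length by omega, mem_occ, win_mod hLv.per,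
          ← hvv]
        exact ⟨Nat.mod_lt _ hLv.pos, hF v hvX⟩
      · rw [show 2 * p v + (v.length - 2 * p v) = v.length by omega, win_mod hLv.per, ← hvv]
    refine (Finset.card_le_card hsub).trans (Finset.card_biUnion_le.trans ?_)
    exact Finset.sum_le_sum fun j _ => Finset.card_image_le
  have hT : ∀ c ∈ I, ∑ d ∈ I with c.1 ≤ d.1, (orders w n d.1 d.2).card + 2 * c.1 ≤ n + 1 := by
    intro c hc
    obtain ⟨v, hvX, rfl⟩ := Finset.mem_image.1 hc
    have hl := hlen v hvX
    have h2v := h2 v hvX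
    have hLv := hL v hvX
    refine sum_orders_le hI (by simp only [hφ]; omega) ?_
    have hm : win (s v) (r v) v.length ∈ facs w n v.length := by
      rw [← hv v hvX]; exact hF v hvX
    have := Finset.card_le_card_of_injOn (s := Finset.range (p v)) (t := facs w n (p v))
      (fun j => win (s v) (r v + j) (p v)) ?_ ?_
    · simpa using this
    · intro j hj
      simp only [Finset.coe_range, Set.mem_Iio] at hj
      exact win_mem_facs_sub hm (by omega)
    · intro a ha b hb hab
      simp only [Finset.coe_range, Set.mem_Iio] at ha hb
      rcases lt_trichotomy a b with h | h | h
      · exact (hLv.win_inj (by omega) (by omega) hab).elim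
      · exact h
      · exact (hLv.win_inj (by omega) (by omega) hab.symm).elim
  calc 8 * X.card ≤ ∑ c ∈ I, 8 * ∑ j ∈ Finset.range (n + 1),
        (occ w n c.1 c.2 (2 * c.1 + j)).card := by
        rw [hcard, Finset.mul_sum]
        exact Finset.sum_le_sum fun c hc => Nat.mul_le_mul_left 8 (hfib c hc)
    _ ≤ ∑ c ∈ I, (4 * c.1 * (orders w n c.1 c.2).card + (orders w n c.1 c.2).card ^ 2 +
        4 * (orders w n c.1 c.2).card) :=
        Finset.sum_le_sum fun c hc => sum_occ_bound (hI c hc).pos (hI c hc).per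
    _ ≤ (n + 3) ^ 2 := optimise I (fun c => c.1) (fun c => (orders w n c.1 c.2).card) n hT

end Count

/-! ### From lists to windows -/

lemma win_getD (w : List α) (a : α) (i ℓ : ℕ) (h : i + ℓ ≤ w.length) :
    win (fun j => w.getD j a) i ℓ = (w.drop i).take ℓ := by
  apply List.ext_getElem
  · simp; omega
  · intro k h1 h2
    simp only [win_length] at h1
    have : i + k < w.length := by omega
    simp [win, this]

lemma infix_mem_facs {v w : List α} (a : α) (h : v <:+: w) :
    v ∈ facs (fun j => w.getD j a) w.length v.length := by
  obtain ⟨x, y, rfl⟩ := h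
  refine mem_facs.2 ⟨x.length, by simp, ?_⟩
  rw [win_getD _ _ _ _ (by simp)]
  simp

lemma wpow_length (u : List α) (k : ℕ) : (wpow u k).length = k * u.length := by
  induction k with
  | zero => simp [wpow]
  | succ k ih => simp [wpow, ih]; ring

/-- The word `wpow p k ++ p'` with `p'` a prefix of `p` has period `p.length`. -/
lemma ratPow_periodic (p p' : List α) (h : p' <+: p) (a : α) (k i : ℕ)
    (hi : i + p.length < (wpow p k ++ p').length) :
    (wpow p k ++ p').getD (i + p.length) a = (wpow p k ++ p').getD i a := by
  induction k generalizing i with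
  | zero =>
    have := h.length_le
    simp [wpow] at hi
    omega
  | succ k ih =>
    have e : wpow p (k + 1) ++ p' = p ++ (wpow p k ++ p') := by simp [wpow]
    rw [e] at hi ⊢
    rw [List.getD_append_right _ _ _ _ (by omega), Nat.add_sub_cancel]
    rw [List.length_append] at hi
    rcases lt_or_ge i p.length with h1 | h1
    · rw [List.getD_append _ _ _ _ h1]
      cases k with
      | zero =>
        simp only [wpow, List.nil_append] at hi ⊢
        obtain ⟨z, rfl⟩ := h
        rw [List.getD_append _ _ _ _ (by omega)]
      | succ k =>
        rw [wpow, List.append_assoc, List.getD_append _ _ _ _ h1]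
    · rw [List.getD_append_right _ _ _ _ h1, ← ih (i - p.length) (by omega),
        Nat.sub_add_cancel h1]

lemma RP_bound (w : List α) : 8 * RP w ≤ (w.length + 3) ^ 2 := by
  classical
  rcases isEmpty_or_nonempty α with hα | ⟨⟨a⟩⟩
  · have : {v : List α | v <:+: w ∧ ∃ p, IsRatPow p v} = ∅ := by
      ext v
      simp only [Set.mem_ofPred_eq, Set.mem_empty_iff_false, iff_false]
      rintro ⟨_, p, hp, _⟩
      cases p with
      | nil => exact hp rfl
      | cons x _ => exact hα.elim x
    simp [RP, this]
  · let _ : LinearOrder α := IsWellOrder.linearOrder (WellOrderingRel (α := α))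
    set f : ℕ → α := fun j => w.getD j a with hf
    have hfin : {v : List α | v <:+: w ∧ ∃ p, IsRatPow p v}.Finite := by
      refine ((Finset.range (w.length + 1)).biUnion fun ℓ => facs f w.length ℓ).finite_toSet.subset
        fun v hv => ?_
      simp only [Finset.coe_biUnion, Set.mem_iUnion]
      exact ⟨v.length, by simpa [Nat.lt_succ_iff] using hv.1.length_le, infix_mem_facs a hv.1⟩
    rw [RP, Set.ncard_eq_toFinset_card _ hfin]
    refine count_bound f w.length _ fun v hv => ?_
    rw [Set.Finite.mem_toFinset] at hv
    obtain ⟨hvw, p, hp, k, p', hk, hpre, -, e⟩ := hv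
    refine ⟨infix_mem_facs a hvw, ?_⟩
    have h2 : 2 * p.length ≤ v.length := by
      rw [e, List.length_append, wpow_length]
      nlinarith
    obtain ⟨d, s, r, h3, h4, h5⟩ := exists_lyn (fun j => v.getD j a) v.length p.length
      (List.length_pos_iff.2 hp) h2 (fun i hi => by
        rw [e] at hi ⊢
        exact ratPow_periodic p p' hpre a k i hi)
    refine ⟨d, s, r, h3, h4, ?_⟩
    rw [← h5, win_getD _ _ _ _ (by omega)]
    simp

end RationalPowers

universe u

/-- There is a constant `C > 0` such that every word `w` of length `n`
satisfies `RP(w) ≤ n²/8 + C n`. -/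
theorem stmt_11 :
    ∃ C : ℝ, 0 < C ∧ ∀ (α : Type u) (w : List α),
      (RP w : ℝ) ≤ (w.length : ℝ) ^ 2 / 8 + C * (w.length : ℝ) := by
  refine ⟨2, by norm_num, fun α w => ?_⟩
  rcases Nat.eq_zero_or_pos w.length with h0 | h0
  · obtain rfl := List.length_eq_zero_iff.1 h0
    have : {v : List α | v <:+: [] ∧ ∃ p, IsRatPow p v} = ∅ := by
      ext v
      simp only [Set.mem_ofPred_eq, Set.mem_empty_iff_false, iff_false, List.infix_nil]
      rintro ⟨rfl, p, hp, k, p', hk, -, -, e⟩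
      have h1 := congrArg List.length e
      have h2 := List.length_pos_iff.2 hp
      rw [List.length_append, wpow_length, List.length_nil] at h1
      nlinarith
    have h3 : RP ([] : List α) = 0 := by rw [RP, this, Set.ncard_empty]
    simp [h3]
  · have h1 : (8 : ℝ) * RP w ≤ ((w.length : ℝ) + 3) ^ 2 := by exact_mod_cast RP_bound w
    have h2 : (1 : ℝ) ≤ w.length := by exact_mod_cast h0
    nlinarith
end

section
/- Let s > 0, let 0 ≤ y ≤ s, and let 0 ≤ x ≤ s − y, with x, y real. Then F(x,y) ≤ s²·φ(y/s). -/
open Classical in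
/-- `F(ℓ,m) = (m - ℓ/2)ℓ` if `m ≥ ℓ`, and `m²/2` if `m < ℓ`. -/
noncomputable def Freal (l m : ℝ) : ℝ :=
  if l ≤ m then (m - l / 2) * l else m ^ 2 / 2

open Classical in
/-- `φ(r) = r²/2` for `0 ≤ r ≤ 1/2` and `φ(r) = (1-r)(3r-1)/2` for `1/2 ≤ r ≤ 1`. -/
noncomputable def phi (r : ℝ) : ℝ :=
  if r ≤ 1 / 2 then r ^ 2 / 2 else (1 - r) * (3 * r - 1) / 2

open Classical in
/-- The function `V` on `[1,2]`. -/
noncomputable def Vfun (T : ℝ) : ℝ :=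
  if T ≤ 4 / 3 then (2 - T) * (3 * T - 2) / 4
  else if T ≤ 3 / 2 then 3 / 2 * T ^ 2 - 4 * T + 3
  else (3 - T) * (T - 1) / 2

/-- For `s > 0`, `0 ≤ y ≤ s` and `0 ≤ x ≤ s - y`, one has `F(x,y) ≤ s² φ(y/s)`. -/
theorem stmt_12 (s x y : ℝ) (hs : 0 < s) (hy0 : 0 ≤ y) (hys : y ≤ s)
    (hx0 : 0 ≤ x) (hxs : x ≤ s - y) :
    Freal x y ≤ s ^ 2 * phi (y / s) := by
  have hmul : s ^ 2 * phi (y / s) =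
      if y / s ≤ 1 / 2 then y ^ 2 / 2 else (s - y) * (3 * y - s) / 2 := by
    unfold phi
    split_ifs <;> field_simp
  rw [hmul]
  unfold Freal
  split_ifs with h1 h2 h2
  · nlinarith [sq_nonneg (y - x)]
  · rw [not_le, lt_div_iff₀ hs] at h2
    -- With `d = s - y < y`, the right side is `(y - d / 2) * d`, and it exceeds
    -- the left side by `(d - x) * (y - (d + x) / 2)`.
    have h3 : 0 ≤ y - ((s - y) + x) / 2 := by linarith
    nlinarith [mul_nonneg (sub_nonneg.2 hxs) h3]
  · exact le_rfl
  · rw [not_le, lt_div_iff₀ hs] at h2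
    -- Here `x > y > s / 2` contradicts `x ≤ s - y`.
    linarith
end

section
/- Let r₁, r₂ be real numbers with 0 ≤ r₁, r₂ < 1/2 and 1/2 < r₁ + r₂ ≤ 1. Then φ(r₁) + φ(r₂) ≤ φ(1/2) + φ(r₁ + r₂ − 1/2). -/
/-- If `0 ≤ r₁, r₂ < 1/2` and `1/2 < r₁ + r₂ ≤ 1`, then
`φ(r₁) + φ(r₂) ≤ φ(1/2) + φ(r₁ + r₂ - 1/2)`. -/
theorem stmt_14 (r₁ r₂ : ℝ) (h1 : 0 ≤ r₁) (h1' : r₁ < 1 / 2)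
    (h2 : 0 ≤ r₂) (h2' : r₂ < 1 / 2)
    (hsum : 1 / 2 < r₁ + r₂) (hsum' : r₁ + r₂ ≤ 1) :
    phi r₁ + phi r₂ ≤ phi (1 / 2) + phi (r₁ + r₂ - 1 / 2) := by
  -- `r₁ + r₂ - 1 / 2 ≤ 1 / 2`, so only the quadratic branch `r ^ 2 / 2` of `phi` occurs, and
  -- the right side minus the left side is then exactly `(1 / 2 - r₁) * (1 / 2 - r₂)`.
  have h : r₁ + r₂ - 1 / 2 ≤ 1 / 2 := by linarith
  unfold phi
  rw [if_pos h1'.le, if_pos h2'.le, if_pos le_rfl, if_pos h]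
  nlinarith [mul_nonneg (sub_nonneg.2 h1'.le) (sub_nonneg.2 h2'.le)]
end

section
/- Let 0 < s ≤ 1/2 and s ≤ B ≤ 2s be real numbers. Let (x_j, y_j), j in a finite index set J, be real pairs satisfying x_j ≥ 0, y_j ≥ 0, x_j + y_j ≤ s for all j, and Σ_{j∈J} y_j ≤ B. Then Σ_{j∈J} F(x_j, y_j) ≤ s²·V(B/s). -/
open Classical in
/-- The value function of the packing problem: the supremum of `∑ φ(r_j)` over nonnegative `r_j`
with `∑ r_j ≤ T`, for `0 ≤ T ≤ 2`. The successive pieces correspond to the optimal packings: one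
small item; one large; one large and one small; two equal large; two equal large and one small;
three equal large. An item is large when it is at least `1/2`. -/
noncomputable def Wfun (T : ℝ) : ℝ :=
  if T ≤ 1 / 2 then T ^ 2 / 2
  else if T ≤ 2 / 3 then (1 - T) * (3 * T - 1) / 2
  else if T ≤ 1 then 3 / 4 * T ^ 2 - T + 1 / 2
  else if T ≤ 4 / 3 then (2 - T) * (3 * T - 2) / 4
  else if T ≤ 3 / 2 then 3 / 2 * T ^ 2 - 4 * T + 3
  else (3 - T) * (T - 1) / 2

lemma Wfun_eq_Vfun {T : ℝ} (h : 1 ≤ T) : Wfun T = Vfun T := by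
  unfold Wfun Vfun
  split_ifs <;> first | rfl | (exfalso; linarith) | skip
  have : T = 1 := by linarith
  subst this; norm_num

set_option maxHeartbeats 2000000 in
/-- The dynamic-programming inequality: adding an item of size `r` to a packing of total size `u`
cannot beat the optimum for total size `r + u`. -/
lemma phi_add_Wfun_le {r u : ℝ} (hr : 0 ≤ r) (hu : 0 ≤ u) (hr1 : r ≤ 1) (hT : r + u ≤ 2) :
    phi r + Wfun u ≤ Wfun (r + u) := by
  unfold phi Wfun
  -- The squares vanish on the lines where the inequality is an equality, that is, where `r` is
  -- one of the items of an optimal packing of total size `r + u`.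
  split_ifs <;> first
    | (exfalso; linarith)
    | nlinarith [mul_nonneg hr hu]
    | nlinarith [sq_nonneg (r - u)]
    | nlinarith [sq_nonneg (3 * r + u - 2)]
    | nlinarith [sq_nonneg (r + 3 * u - 2)]
    | nlinarith [sq_nonneg (2 * r + u - 2)]
    | nlinarith [sq_nonneg (2 * r + 3 * u - 4)]
    | nlinarith [sq_nonneg (u - 2 * r)]

lemma sum_phi_le_Wfun {ι : Type*} (J : Finset ι) (r : ι → ℝ) (h0 : ∀ j ∈ J, 0 ≤ r j)
    (h1 : ∀ j ∈ J, r j ≤ 1) (hT : ∑ j ∈ J, r j ≤ 2) :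
    ∑ j ∈ J, phi (r j) ≤ Wfun (∑ j ∈ J, r j) := by
  classical
  induction J using Finset.induction_on with
  | empty => simp [Wfun]
  | insert a J ha ih =>
    rw [Finset.sum_insert ha] at hT
    rw [Finset.sum_insert ha, Finset.sum_insert ha]
    have ha0 := h0 a (Finset.mem_insert_self a J)
    have hJ0 : ∀ j ∈ J, 0 ≤ r j := fun j hj => h0 j (Finset.mem_insert_of_mem hj)
    have := ih hJ0 (fun j hj => h1 j (Finset.mem_insert_of_mem hj)) (by linarith)
    have := phi_add_Wfun_le ha0 (Finset.sum_nonneg hJ0) (h1 a (Finset.mem_insert_self a J)) hT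
    linarith

lemma Wfun_mono {t T : ℝ} (ht : 0 ≤ t) (h : t ≤ T) (hT : T ≤ 2) : Wfun t ≤ Wfun T := by
  unfold Wfun
  split_ifs <;> first | (exfalso; linarith) | nlinarith

/-- For fixed `y`, the constraint `x ≤ s - y` bounds `F(x, y)` by the rescaled `φ`: `F(·, y)` is
nondecreasing, so only `x = min (y, s - y)` matters. -/
lemma Freal_le_phi {s x y : ℝ} (hs : 0 < s) (hx : 0 ≤ x) (hxy : x + y ≤ s) :
    Freal x y ≤ s ^ 2 * phi (y / s) := by
  obtain ⟨r, rfl⟩ : ∃ r, y = s * r := ⟨y / s, by field_simp⟩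
  obtain ⟨z, rfl⟩ : ∃ z, x = s * z := ⟨x / s, by field_simp⟩
  have hz : 0 ≤ z := nonneg_of_mul_nonneg_right hx hs
  have hzr : z + r ≤ 1 := by
    by_contra! hc
    nlinarith
  rw [mul_div_cancel_left₀ r hs.ne']
  have key : Freal (s * z) (s * r) = s ^ 2 * Freal z r := by
    unfold Freal
    simp only [mul_le_mul_iff_right₀ hs]
    split_ifs <;> ring
  rw [key]
  refine mul_le_mul_of_nonneg_left ?_ (sq_nonneg s)
  unfold Freal phi
  split_ifs with h1 h2 h2
  · nlinarith [sq_nonneg (r - z)]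
  · nlinarith [mul_nonneg (sub_nonneg.2 hzr) (sub_nonneg.2 h1)]
  · exact le_rfl
  · exfalso; linarith

/-- The packing bound: `Σ F(x_j, y_j) ≤ s² V(B/s)`. -/
theorem stmt_15 {ι : Type*} (J : Finset ι) (x y : ι → ℝ) (s B : ℝ)
    (hs0 : 0 < s) (hs : s ≤ 1 / 2) (hB1 : s ≤ B) (hB2 : B ≤ 2 * s)
    (hx : ∀ j ∈ J, 0 ≤ x j) (hy : ∀ j ∈ J, 0 ≤ y j)
    (hxy : ∀ j ∈ J, x j + y j ≤ s)
    (hsum : ∑ j ∈ J, y j ≤ B) :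
    ∑ j ∈ J, Freal (x j) (y j) ≤ s ^ 2 * Vfun (B / s) := by
  have hBs1 : 1 ≤ B / s := by rw [le_div_iff₀ hs0]; linarith
  have hBs2 : B / s ≤ 2 := by rw [div_le_iff₀ hs0]; linarith
  have hle : ∑ j ∈ J, y j / s ≤ B / s := by
    rw [← Finset.sum_div]; gcongr
  have h0 : ∀ j ∈ J, 0 ≤ y j / s := fun j hj => div_nonneg (hy j hj) hs0.le
  have h1 : ∀ j ∈ J, y j / s ≤ 1 := fun j hj => by
    rw [div_le_one hs0]; linarith [hx j hj, hxy j hj]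
  calc ∑ j ∈ J, Freal (x j) (y j) ≤ ∑ j ∈ J, s ^ 2 * phi (y j / s) :=
        Finset.sum_le_sum fun j hj => Freal_le_phi hs0 (hx j hj) (hxy j hj)
    _ = s ^ 2 * ∑ j ∈ J, phi (y j / s) := by rw [Finset.mul_sum]
    _ ≤ s ^ 2 * Vfun (B / s) := by
      refine mul_le_mul_of_nonneg_left ?_ (sq_nonneg s)
      rw [← Wfun_eq_Vfun hBs1]
      exact (sum_phi_le_Wfun J _ h0 h1 (hle.trans hBs2)).trans
        (Wfun_mono (Finset.sum_nonneg h0) hle hBs2)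
end

section
/- Let (x_j, y_j), j in a finite index set J, be real pairs satisfying x_j ≥ 0, y_j ≥ 0, x_j + y_j ≤ 1/2 for all j, and Σ_{j∈J} y_j ≤ 1. Then Σ_{j∈J} F(x_j, y_j) ≤ 1/8. -/
theorem Freal_le_sq (l m : ℝ) : Freal l m ≤ m ^ 2 / 2 := by
  unfold Freal
  split_ifs
  · nlinarith [sq_nonneg (m - l)]
  · exact le_rfl

/-- For `m ≥ 1/4` the constraint `l ≤ 1/2 - m` forces `l ≤ m`, where `F` increases in `l`; the bound
is the value at `l = 1/2 - m`. -/
theorem Freal_le_concave {l m : ℝ} (hm : 1 / 4 ≤ m) (h : l + m ≤ 1 / 2) :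
    Freal l m ≤ m - 3 / 2 * m ^ 2 - 1 / 8 := by
  unfold Freal
  rw [if_pos (by linarith)]
  nlinarith [mul_nonneg (by linarith : 0 ≤ 1 / 2 - m - l)
    (by linarith : 0 ≤ m - (1 / 2 - m + l) / 2)]

/-- Numbers in `[0, 1/4]` with sum `s` have the largest sum of squares when all but one of them are
`0` or `1/4`. -/
theorem sum_sq_le_of_le_quarter {ι : Type*} (J : Finset ι) (y : ι → ℝ)
    (h0 : ∀ j ∈ J, 0 ≤ y j) (h1 : ∀ j ∈ J, y j ≤ 1 / 4) (n : ℕ)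
    (hn : ∑ j ∈ J, y j ≤ ((n : ℝ) + 1) / 4) :
    ∑ j ∈ J, y j ^ 2 ≤ (n : ℝ) / 16 + (∑ j ∈ J, y j - (n : ℝ) / 4) ^ 2 := by
  classical
  induction J using Finset.induction_on generalizing n with
  | empty => simp; positivity
  | insert a J ha ih =>
    rw [Finset.sum_insert ha] at hn ⊢
    rw [Finset.sum_insert ha]
    have ih' := ih (fun j hj => h0 j (Finset.mem_insert_of_mem hj))
      (fun j hj => h1 j (Finset.mem_insert_of_mem hj))
    have ha0 := h0 a (Finset.mem_insert_self a J)
    have ha1 := h1 a (Finset.mem_insert_self a J)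
    have hs0 : 0 ≤ ∑ j ∈ J, y j :=
      Finset.sum_nonneg fun j hj => h0 j (Finset.mem_insert_of_mem hj)
    rcases le_total ((n : ℝ) / 4) (∑ j ∈ J, y j) with hle | hle
    · have := ih' n (by linarith)
      nlinarith [mul_nonneg ha0 (sub_nonneg.2 hle)]
    · -- The old sum already fits below `n/4`, so `y a` may be merged with the previous remainder,
      -- overflowing into one more full `1/4`.
      cases n with
      | zero =>
        have := ih' 0 (by push_cast at hle ⊢; linarith)
        push_cast at *
        nlinarith [mul_nonneg ha0 hs0]
      | succ n =>
        push_cast at hle hn ⊢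
        have := ih' n hle
        nlinarith [mul_nonneg (sub_nonneg.2 ha1) (sub_nonneg.2 hle)]

/-- If `x_j + y_j ≤ 1/2` for all `j` and `Σ y_j ≤ 1`, then `Σ F(x_j,y_j) ≤ 1/8`. -/
theorem stmt_16 {ι : Type*} (J : Finset ι) (x y : ι → ℝ)
    (hx : ∀ j ∈ J, 0 ≤ x j) (hy : ∀ j ∈ J, 0 ≤ y j)
    (hxy : ∀ j ∈ J, x j + y j ≤ 1 / 2)
    (hsum : ∑ j ∈ J, y j ≤ 1) :
    ∑ j ∈ J, Freal (x j) (y j) ≤ 1 / 8 := by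
  classical
  set B := J.filter (fun j => 1 / 4 ≤ y j) with hB
  set A := J.filter (fun j => ¬ 1 / 4 ≤ y j) with hA
  have hBJ : ∀ j ∈ B, j ∈ J ∧ 1 / 4 ≤ y j := fun j hj => Finset.mem_filter.1 hj
  have hA0 : ∀ j ∈ A, 0 ≤ y j := fun j hj => hy j (Finset.mem_filter.1 hj).1
  have hA1 : ∀ j ∈ A, y j ≤ 1 / 4 := fun j hj => (not_le.1 (Finset.mem_filter.1 hj).2).le
  rw [← Finset.sum_filter_add_sum_filter_not J (fun j => 1 / 4 ≤ y j)] at hsum ⊢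
  rw [← hA, ← hB] at hsum ⊢
  have hFB : ∑ j ∈ B, Freal (x j) (y j)
      ≤ ∑ j ∈ B, y j - 3 / 2 * ∑ j ∈ B, y j ^ 2 - (B.card : ℝ) / 8 := by
    calc _ ≤ ∑ j ∈ B, (y j - 3 / 2 * y j ^ 2 - 1 / 8) :=
          Finset.sum_le_sum fun j hj => Freal_le_concave (hBJ j hj).2 (hxy j (hBJ j hj).1)
      _ = _ := by
          simp only [Finset.sum_sub_distrib, ← Finset.mul_sum, Finset.sum_const, nsmul_eq_mul]
          ring
  have hFA : ∑ j ∈ A, Freal (x j) (y j) ≤ (∑ j ∈ A, y j ^ 2) / 2 := by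
    rw [Finset.sum_div]
    exact Finset.sum_le_sum fun j _ => Freal_le_sq _ _
  have hCS : (∑ j ∈ B, y j) ^ 2 ≤ (B.card : ℝ) * ∑ j ∈ B, y j ^ 2 := sq_sum_le_card_mul_sum_sq
  have hcard : (B.card : ℝ) / 4 ≤ ∑ j ∈ B, y j := by
    have := Finset.card_nsmul_le_sum B y (1 / 4) fun j hj => (hBJ j hj).2
    rw [nsmul_eq_mul] at this
    linarith
  have hlin : ∑ j ∈ A, y j ^ 2 ≤ (∑ j ∈ A, y j) / 4 := by
    rw [Finset.sum_div]
    exact Finset.sum_le_sum fun j hj => by nlinarith [hA0 j hj, hA1 j hj]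
  have hquad := sum_sq_le_of_le_quarter A y hA0 hA1
  have hQ0 : 0 ≤ ∑ j ∈ B, y j ^ 2 := Finset.sum_nonneg fun j _ => sq_nonneg _
  have hs0 : 0 ≤ ∑ j ∈ A, y j := Finset.sum_nonneg hA0
  have hk : B.card ≤ 4 := by
    have : (B.card : ℝ) ≤ 4 := by linarith
    exact_mod_cast this
  generalize ∑ j ∈ A, y j = s at *
  generalize ∑ j ∈ B, y j = S at *
  generalize ∑ j ∈ A, y j ^ 2 = q at *
  generalize ∑ j ∈ B, y j ^ 2 = Q at *
  generalize B.card = k at *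
  interval_cases k <;> push_cast at hFB hCS hcard
  · -- With no big index, Cauchy–Schwarz degenerates to `S = 0`.
    have : S = 0 := by nlinarith [sq_nonneg S]
    linarith
  · rcases le_total s (1 / 2) with h | h
    · nlinarith [sq_nonneg (S - 1 / 3)]
    · have := hquad 2 (by push_cast; linarith)
      push_cast at this
      nlinarith [sq_nonneg (S - 1 / 4), mul_nonneg (sub_nonneg.2 h) (sub_nonneg.2 hsum),
        mul_nonneg (by linarith : 0 ≤ 1 / 2 - S) (sub_nonneg.2 hsum)]
  · rcases le_total s (1 / 4) with h | h
    · nlinarith [sq_nonneg (S - 2 / 3)]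
    · have := hquad 1 (by push_cast; linarith)
      push_cast at this
      nlinarith [sq_nonneg (S - 1 / 2), mul_nonneg (sub_nonneg.2 h) (sub_nonneg.2 hsum),
        mul_nonneg (by linarith : 0 ≤ 3 / 4 - S) (sub_nonneg.2 hsum)]
  · have := hquad 0 (by push_cast; linarith)
    push_cast at this
    nlinarith [mul_nonneg hs0 (sub_nonneg.2 hsum),
      mul_nonneg (by linarith : 0 ≤ 1 - S) (sub_nonneg.2 hsum)]
  · have : S = 1 := by linarith
    subst this
    linarith
end

section
/- For every positive integer k there exists a word w over a two-letter alphabet of length n = 9k + 3 such that RP(w) ≥ n²/9, where RP(w) is the number of distinct factors of w that are rational powers of exponent at least 2 of some nonempty word. -/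
/-- The positions of the letter `b` in `(a^(k-1) b a^k b)^4 a^(k-1)`. They are listed explicitly,
rather than modulo `2k + 1`, so that every statement about them is linear arithmetic. -/
def IsB (k j : ℕ) : Prop :=
  j + 1 = k ∨ j = 2 * k ∨ j = 3 * k ∨ j = 4 * k + 1 ∨ j = 5 * k + 1 ∨ j = 6 * k + 2 ∨
    j = 7 * k + 2 ∨ j = 8 * k + 3

open Classical in
/-- The letter at position `j`, with `a = 0` and `b = 1`. -/
noncomputable def letter (k j : ℕ) : Fin 2 := if IsB k j then 1 else 0

/-- The word of length `q` read from position `i`. -/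
noncomputable def factor (k i q : ℕ) : List (Fin 2) := (List.range' i q).map (letter k)

theorem letter_eq_iff (k i j : ℕ) : letter k i = letter k j ↔ (IsB k i ↔ IsB k j) := by
  unfold letter
  by_cases h : IsB k i <;> by_cases h' : IsB k j <;> simp [h, h']

theorem length_factor (k i q : ℕ) : (factor k i q).length = q := by
  simp [factor]

theorem factor_add (k i a b : ℕ) : factor k i (a + b) = factor k i a ++ factor k (i + a) b := by
  unfold factor
  rw [← List.map_append]
  congr 1
  simp

theorem factor_infix (k i q n : ℕ) (h : i + q ≤ n) : factor k i q <:+: factor k 0 n := by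
  obtain ⟨r, rfl⟩ := Nat.exists_eq_add_of_le h
  refine ⟨factor k 0 i, factor k (i + q) r, ?_⟩
  rw [factor_add, factor_add]
  simp

theorem factor_congr (k i i' q : ℕ) (h : ∀ t < q, letter k (i + t) = letter k (i' + t)) :
    factor k i q = factor k i' q := by
  apply List.ext_getElem
  · simp [length_factor]
  · intro t h1 h2
    simpa [factor] using h t (by simpa [length_factor] using h1)

theorem letter_eq_of_factor_eq (k i i' q : ℕ) (h : factor k i q = factor k i' q) (t : ℕ)
    (ht : t < q) : letter k (i + t) = letter k (i' + t) := by
  have h1 : (factor k i q)[t]? = (factor k i' q)[t]? := by rw [h]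
  simpa [factor, ht] using h1

theorem factor_eq_wpow (k i p r m : ℕ)
    (h : ∀ j, i ≤ j → j + p < i + (m * p + r) → letter k j = letter k (j + p)) :
    factor k i (m * p + r) = wpow (factor k i p) m ++ factor k i r := by
  induction m with
  | zero => simp [wpow]
  | succ m ih =>
    have e : (m + 1) * p + r = p + (m * p + r) := by ring
    rw [e] at h ⊢
    rw [factor_add, wpow, List.append_assoc, ← ih fun j h1 h2 => h j h1 (by omega)]
    congr 1
    apply factor_congr
    intro t ht
    rw [h (i + t) (by omega) (by omega)]
    congr 1
    omega

theorem isRatPow_of_periodic (k i p q : ℕ) (hp : 0 < p) (hq : 2 * p ≤ q)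
    (h : ∀ j, i ≤ j → j + p < i + q → letter k j = letter k (j + p)) :
    ∃ u, IsRatPow u (factor k i q) := by
  have hr : q % p < p := Nat.mod_lt _ hp
  have e : q / p * p + q % p = q := Nat.div_add_mod' q p
  refine ⟨factor k i p, ?_, q / p, factor k i (q % p), ?_, ?_, ?_, ?_⟩
  · intro h0
    have := congrArg List.length h0
    rw [length_factor] at this
    simp at this
    omega
  · exact (Nat.le_div_iff_mul_le hp).2 hq
  · obtain ⟨s, hs⟩ := Nat.exists_eq_add_of_le hr.le
    exact ⟨factor k (i + q % p) s, by rw [← factor_add, ← hs]⟩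
  · intro h0
    have := congrArg List.length h0
    simp only [length_factor] at this
    omega
  · rw [← factor_eq_wpow, e]
    rwa [e]

/-- Factors of length at least one period that start at distinct positions of the first period are
different: if a shift by `d` with `1 ≤ d ≤ 2k` preserves the letter `b`, then the occurrence at `k - 1` forces
`d = k + 1`, while the occurrence at `2k` excludes it. -/
theorem factor_injective_aux (k i i' q : ℕ) (hk : 1 ≤ k) (hi : i < i') (hi' : i' < 2 * k + 1)
    (hq : 2 * k + 1 ≤ q) (h : factor k i q = factor k i' q) : False := by
  have H : ∀ j, i ≤ j → j < i + q → (IsB k j ↔ IsB k (j + (i' - i))) := by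
    intro j h1 h2
    have := letter_eq_of_factor_eq k i i' q h (j - i) (by omega)
    rw [letter_eq_iff] at this
    rwa [show i + (j - i) = j by omega, show i' + (j - i) = j + (i' - i) by omega] at this
  have H2 := H (2 * k) (by omega) (by omega)
  -- `k - 1` and `3k` are the same position modulo the period; one of them lies in the window.
  rcases Nat.lt_or_ge i k with hik | hik
  · have H1 := H (k - 1) (by omega) (by omega)
    unfold IsB at H1 H2
    omega
  · have H1 := H (3 * k) (by omega) (by omega)
    unfold IsB at H1 H2
    omega

theorem factor_injective (k i i' q q' : ℕ) (hk : 1 ≤ k) (hi : i < 2 * k + 1)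
    (hi' : i' < 2 * k + 1) (hq : 2 * k + 1 ≤ q) (h : factor k i q = factor k i' q') :
    i = i' ∧ q = q' := by
  have e : q = q' := by
    have := congrArg List.length h
    simpa only [length_factor] using this
  subst e
  refine ⟨?_, rfl⟩
  rcases Nat.lt_trichotomy i i' with h1 | h1 | h1
  · exact (factor_injective_aux k i i' q hk h1 hi' hq h).elim
  · exact h1
  · exact (factor_injective_aux k i' i q hk h1 hi hq h.symm).elim

/-- The triangle of pairs `(i, j)` with `i + j < m`. -/
def triangle (m : ℕ) : Finset (ℕ × ℕ) :=
  (Finset.range m ×ˢ Finset.range m).filter fun x => x.1 + x.2 < m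

theorem mem_triangle (m : ℕ) (x : ℕ × ℕ) : x ∈ triangle m ↔ x.1 + x.2 < m := by
  simp only [triangle, Finset.mem_filter, Finset.mem_product, Finset.mem_range]
  omega

theorem card_triangle (m : ℕ) : 2 * (triangle m).card = m * (m + 1) := by
  induction m with
  | zero => simp [triangle]
  | succ m ih =>
    have e : triangle (m + 1) = triangle m ∪ Finset.HasAntidiagonal.antidiagonal m := by
      ext x
      simp only [Finset.mem_union, mem_triangle, Finset.HasAntidiagonal.mem_antidiagonal]
      omega
    have d : Disjoint (triangle m) (Finset.HasAntidiagonal.antidiagonal m) := by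
      rw [Finset.disjoint_left]
      intro x hx
      rw [mem_triangle] at hx
      rw [Finset.HasAntidiagonal.mem_antidiagonal]
      omega
    rw [e, Finset.card_union_of_disjoint d, Finset.Nat.card_antidiagonal, mul_add, ih]
    ring

/-- The pairs `(start, length)` that are counted: those with length at least `2P`, split into a
rectangle and a triangle, then those of period `k` and those of period `k + 1`. -/
def pairs (k : ℕ) : Finset (ℕ × ℕ) :=
  Finset.range (2 * k + 1) ×ˢ Finset.Ico (4 * k + 2) (7 * k + 4) ∪
    ((triangle (2 * k)).image (fun x => (x.1, 7 * k + 4 + x.2)) ∪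
      ((triangle (k - 1)).image (fun x => (k + 1 + x.1, 2 * k + 1 + x.2)) ∪
        (triangle (k - 1)).image (fun x => (x.1, 2 * k + 2 + x.2))))

theorem card_pairs (k : ℕ) (hk : 1 ≤ k) : (pairs k).card = 9 * k ^ 2 + 7 * k + 2 := by
  have inj (a b m : ℕ) :
      ((triangle m).image (fun x => (a + x.1, b + x.2))).card = (triangle m).card := by
    apply Finset.card_image_of_injective
    rintro ⟨x, y⟩ ⟨x', y'⟩ h
    simp only [Prod.mk.injEq] at h ⊢
    omega
  have inj0 (b m : ℕ) :
      ((triangle m).image (fun x => (x.1, b + x.2))).card = (triangle m).card := by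
    simpa using inj 0 b m
  have h1 := card_triangle (2 * k)
  have h2 := card_triangle (k - 1)
  unfold pairs
  rw [Finset.card_union_of_disjoint, Finset.card_union_of_disjoint,
    Finset.card_union_of_disjoint, inj, inj0, inj0, Finset.card_product, Finset.card_range,
    Nat.card_Ico]
  · obtain ⟨m, rfl⟩ := Nat.exists_eq_add_of_le' hk
    rw [show 7 * (m + 1) + 4 - (4 * (m + 1) + 2) = 3 * m + 5 by omega]
    simp only [Nat.add_sub_cancel] at h2 ⊢
    nlinarith
  all_goals
    rw [Finset.disjoint_left]
    rintro ⟨i, q⟩ hx hy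
    simp only [Finset.mem_union, Finset.mem_image, Finset.mem_product, Finset.mem_range,
      Finset.mem_Ico, mem_triangle, Prod.mk.injEq, Prod.exists] at hx hy
    grind

theorem isRatPow_of_mem_pairs (k : ℕ) (hk : 1 ≤ k) (i q : ℕ) (h : (i, q) ∈ pairs k) :
    i < 2 * k + 1 ∧ 2 * k + 1 ≤ q ∧ i + q ≤ 9 * k + 3 ∧ ∃ u, IsRatPow u (factor k i q) := by
  simp only [pairs, Finset.mem_union, Finset.mem_image, Finset.mem_product, Finset.mem_range,
    Finset.mem_Ico, mem_triangle, Prod.mk.injEq, Prod.exists] at h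
  have long (h1 : 4 * k + 2 ≤ q) (h2 : i + q ≤ 9 * k + 3) : ∃ u, IsRatPow u (factor k i q) := by
    apply isRatPow_of_periodic k i (2 * k + 1) q (by omega) (by omega)
    intro j h3 h4
    rw [letter_eq_iff]
    unfold IsB
    omega
  rcases h with h | ⟨x, y, h, rfl, rfl⟩ | ⟨x, y, h, rfl, rfl⟩ | ⟨x, y, h, rfl, rfl⟩
  · exact ⟨by omega, by omega, by omega, long (by omega) (by omega)⟩
  · exact ⟨by omega, by omega, by omega, long (by omega) (by omega)⟩
  · refine ⟨by omega, by omega, by omega, isRatPow_of_periodic k _ k _ (by omega) (by omega) ?_⟩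
    intro j h3 h4
    rw [letter_eq_iff]
    unfold IsB
    omega
  · refine ⟨by omega, by omega, by omega,
      isRatPow_of_periodic k _ (k + 1) _ (by omega) (by omega) ?_⟩
    intro j h3 h4
    rw [letter_eq_iff]
    unfold IsB
    omega

theorem card_le_RP (k : ℕ) (hk : 1 ≤ k) : (pairs k).card ≤ RP (factor k 0 (9 * k + 3)) := by
  have fin : {v | v <:+: factor k 0 (9 * k + 3) ∧ ∃ p, IsRatPow p v}.Finite := by
    refine (List.finite_toSet (factor k 0 (9 * k + 3)).sublists).subset ?_
    rintro v ⟨hv, -⟩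
    exact List.mem_sublists.2 hv.sublist
  unfold RP
  rw [← Set.ncard_coe_finset]
  apply Set.ncard_le_ncard_of_injOn (fun x => factor k x.1 x.2) _ _ fin
  · rintro ⟨i, q⟩ h
    obtain ⟨-, -, h3, h4⟩ := isRatPow_of_mem_pairs k hk i q h
    exact ⟨factor_infix k i q _ h3, h4⟩
  · rintro ⟨i, q⟩ h ⟨i', q'⟩ h' e
    obtain ⟨h1, h2, -, -⟩ := isRatPow_of_mem_pairs k hk i q h
    obtain ⟨h1', -, -, -⟩ := isRatPow_of_mem_pairs k hk i' q' h'
    obtain ⟨rfl, rfl⟩ := factor_injective k i i' q q' hk h1 h1' h2 e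
    rfl

/-- For every `k ≥ 1` there is a word `w` over a two-letter alphabet of
length `n = 9k + 3` with `RP(w) ≥ n²/9`. -/
theorem stmt_19 (k : ℕ) (hk : 1 ≤ k) :
    ∃ w : List (Fin 2), w.length = 9 * k + 3 ∧
      ((w.length : ℝ) ^ 2 / 9 ≤ (RP w : ℝ)) := by
  refine ⟨factor k 0 (9 * k + 3), length_factor _ _ _, ?_⟩
  have h := card_le_RP k hk
  rw [card_pairs k hk] at h
  have h' : ((9 * k ^ 2 + 7 * k + 2 : ℕ) : ℝ) ≤ (RP (factor k 0 (9 * k + 3)) : ℝ) := by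
    exact_mod_cast h
  rw [length_factor]
  push_cast at h' ⊢
  have hk0 : (0 : ℝ) ≤ k := Nat.cast_nonneg k
  nlinarith
end
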